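/- arXiv:1811.07960 — 3 statements merged into one kernel-verified Lean document; each statement's English description precedes it below -/
import Mathlib

section
/- (Second formal-group-law formula, Theorem "fglFormulas" of the paper, relation for v̄₂.) Under the stated hypotheses, v₂ ≡ r₁³ + r₃ + s₃ modulo (2, v₁); that is, v₂ − (r₁³ + r₃ + s₃) lies in the ideal (2, v₁) of S. -/
/-!
Adding each logarithm relation to its image under `γ` (using `γ² mᵢ = -mᵢ`) eliminates `γ mᵢ`
and gives `2 m₁ = r₁ + s₁` and `2 m₂ = γ(m₁) r₁² - m₁ s₁² + r₃ + s₃`, so that the 2-series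
relations read `v₁ = -(r₁ + s₁)` and
`v₂ - (r₁³ + r₃ + s₃) = 2 (3 r₁³ - 4 (r₃ + s₃)) + v₁ (4 r₁² - 3 s₁² + r₁ s₁)`.
These identities hold in `S[1/2]`; the last one descends to `S` since `S → S[1/2]` is injective.
-/

noncomputable section

open MvPolynomial

instance : (Ideal.span {(2 : ℤ)}).IsPrime :=
  (Ideal.span_singleton_prime (by norm_num)).mpr Int.prime_two

/-- `ℤ₍₂₎`, the localization of `ℤ` at the prime ideal `(2)`. -/
abbrev Zloc : Type := Localization.AtPrime (Ideal.span {(2 : ℤ)})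

/-- `S = ℤ₍₂₎[r₁, s₁, r₃, s₃]`, the polynomial ring in four variables over `ℤ₍₂₎`. -/
abbrev S : Type := MvPolynomial (Fin 4) Zloc

/-- The generator `r₁`. -/
def r1 : S := X 0
/-- The generator `s₁` (playing the role of `γr̄₁`). -/
def s1 : S := X 1
/-- The generator `r₃`. -/
def r3 : S := X 2
/-- The generator `s₃` (playing the role of `γr̄₃`). -/
def s3 : S := X 3

/-- `S[1/2]`, the localization of `S` away from `2`. -/
abbrev S2 : Type := Localization.Away (2 : S)

/-- The canonical map `S → S[1/2]`. -/
def ι : S →+* S2 := algebraMap S S2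

instance : IsDomain Zloc :=
  IsLocalization.isDomain_localization (Ideal.primeCompl_le_nonZeroDivisors (Ideal.span {(2 : ℤ)}))

lemma Zloc_two_ne_zero : (2 : Zloc) ≠ 0 := by
  have hinj : Function.Injective (algebraMap ℤ Zloc) :=
    IsLocalization.injective Zloc (Ideal.primeCompl_le_nonZeroDivisors (Ideal.span {(2 : ℤ)}))
  intro h
  have : (2 : ℤ) = 0 := hinj (by simpa using h)
  omega

lemma S_two_ne_zero : (2 : S) ≠ 0 := by
  intro h
  apply Zloc_two_ne_zero
  apply MvPolynomial.C_injective (Fin 4) Zloc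
  rw [map_ofNat, map_zero]
  exact h

lemma ι_injective : Function.Injective ι :=
  IsLocalization.injective S2 (powers_le_nonZeroDivisors_of_noZeroDivisors S_two_ne_zero)

lemma isUnit_two_S2 : IsUnit (2 : S2) := by
  have h := IsLocalization.Away.algebraMap_isUnit (S := S2) (2 : S)
  rwa [map_ofNat] at h

/-- **Theorem (fglFormulas, second relation).**  `v₂ ≡ r₁³ + r₃ + s₃ (mod (2, v₁))`. -/
theorem v2_formula
    (γ : S2 ≃+* S2)
    (hγr1 : γ (ι r1) = ι s1) (hγs1 : γ (ι s1) = -ι r1)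
    (hγr3 : γ (ι r3) = ι s3) (hγs3 : γ (ι s3) = -ι r3)
    (m1 m2 m3 m4 : S2)
    (hγ2m1 : γ (γ m1) = -m1) (hγ2m2 : γ (γ m2) = -m2)
    (hγ2m3 : γ (γ m3) = -m3) (hγ2m4 : γ (γ m4) = -m4)
    (hlog1 : m1 - γ m1 = ι r1)
    (hlog2 : m2 - γ m2 = γ m1 * ι r1 ^ 2 + ι r3)
    (hlog3 : m3 - γ m3 = γ m2 * ι r1 ^ 4 + γ m1 * ι r3 ^ 2)
    (hlog4 : m4 - γ m4 = γ m3 * ι r1 ^ 8 + γ m2 * ι r3 ^ 4)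
    (v1 v2 v3 v4 : S)
    (h2s1 : 2 * m1 = 4 * m1 + ι v1)
    (h2s2 : 2 * m2 = 16 * m2 + m1 * ι v1 ^ 2 + ι v2)
    (h2s3 : 2 * m3 = 2 ^ 8 * m3 + m2 * ι v1 ^ 4 + m1 * ι v2 ^ 2 + ι v3)
    (h2s4 : 2 * m4 = 2 ^ 16 * m4 + m3 * ι v1 ^ 8 + m2 * ι v2 ^ 4 + m1 * ι v3 ^ 2 + ι v4)
    : v2 - (r1 ^ 3 + r3 + s3) ∈ Ideal.span ({2, v1} : Set S) := by
  have hm1 : γ m1 + m1 = ι s1 := by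
    have h := congrArg γ hlog1
    rw [map_sub, hγ2m1, hγr1] at h
    linear_combination h
  have hm2 : γ m2 + m2 = -m1 * ι s1 ^ 2 + ι s3 := by
    have h := congrArg γ hlog2
    rw [map_sub, map_add, map_mul, map_pow, hγ2m2, hγ2m1, hγr1, hγr3] at h
    linear_combination h
  have hv1 : ι v1 = -(ι r1 + ι s1) := by
    linear_combination -h2s1 - hlog1 - hm1
  have key : v2 - (r1 ^ 3 + r3 + s3) =
      (3 * r1 ^ 3 - 4 * (r3 + s3)) * 2 + (4 * r1 ^ 2 - 3 * s1 ^ 2 + r1 * s1) * v1 := by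
    apply ι_injective
    -- `γ m₁` and `m₁` are halves of elements of `S`, so denominators are cleared by a factor of 2.
    apply isUnit_two_S2.mul_left_cancel
    simp only [map_sub, map_add, map_mul, map_pow, map_ofNat]
    rw [hv1] at h2s2 ⊢
    linear_combination -2 * h2s2 - 14 * (hlog2 + hm2)
      + (7 * (ι s1 ^ 2 - ι r1 ^ 2) - (ι r1 + ι s1) ^ 2) * hm1
      + (7 * (ι s1 ^ 2 + ι r1 ^ 2) - (ι r1 + ι s1) ^ 2) * hlog1
  rw [key]
  exact Ideal.add_mem _ (Ideal.mul_mem_left _ _ (Ideal.subset_span (by simp)))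
    (Ideal.mul_mem_left _ _ (Ideal.subset_span (by simp)))
end
end

section
/- (Equation (2) of the paper: v̄ᵢ = 2m̄ᵢ modulo Mᵢ.) Under the stated hypotheses, for every i with 1 ≤ i ≤ 4 the element vᵢ − 2mᵢ lies in the S-submodule Mᵢ of S[1/2]. -/
/-!
The `i`-th 2-series relation has the shape `2 m = 2 ^ (n + 2) m + y + v`, where `m = mᵢ`, `v = vᵢ` and
`n + 2 = 2 ^ i`, and `y` is an `S`-combination of `m₁, …, m_{i-1}`. Hence `(1 - 2 ^ (n + 1)) 2 m = y + v`.
The odd integer `2 ^ (n + 1) - 1` is a unit of `ℤ₍₂₎`, hence of `S`, so `2 ^ (n + 2) m` is an `S`-multiple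
of `2 ^ (n + 1) (y + v)`, which lies in `Mᵢ` because `2` and `y` do. Therefore
`v - 2 m = - 2 ^ (n + 2) m - y` lies in `Mᵢ`.
-/

noncomputable section

open MvPolynomial

lemma exists_odd_inverse (n : ℕ) : ∃ u : S, u * (2 ^ (n + 1) - 1) = 1 := by
  have hmem : (2 ^ (n + 1) - 1 : ℤ) ∈ (Ideal.span {(2 : ℤ)}).primeCompl := by
    intro h
    have h2 : (2 : ℤ) ∣ 2 ^ (n + 1) - 1 := Ideal.mem_span_singleton.mp h
    rw [pow_succ] at h2
    omega
  have hunit : IsUnit (algebraMap ℤ Zloc (2 ^ (n + 1) - 1)) :=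
    IsLocalization.map_units Zloc (⟨_, hmem⟩ : (Ideal.span {(2 : ℤ)}).primeCompl)
  obtain ⟨u, hu⟩ := (hunit.map (C : Zloc →+* S)).exists_left_inv
  refine ⟨u, ?_⟩
  simpa only [map_sub, map_pow, map_ofNat, map_one] using hu

/-- One 2-series relation `2 m = 2 ^ (n + 2) m + y + v` gives `v ≡ 2 m` modulo any `S`-submodule
containing `2` and the lower-order terms `y`. -/
lemma sub_two_mul_mem (N : Submodule S S2) (h2 : (2 : S2) ∈ N) (n : ℕ) (m y : S2) (v : S)
    (hy : y ∈ N) (h : 2 * m = 2 ^ (n + 2) * m + y + ι v) : ι v - 2 * m ∈ N := by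
  obtain ⟨u, hu⟩ := exists_odd_inverse n
  have hu' : ι u * (2 ^ (n + 1) - 1) = 1 := by
    simpa only [map_mul, map_sub, map_pow, map_ofNat, map_one] using congrArg ι hu
  have key : ι v - 2 * m = (u * 2 ^ n * v) • (2 : S2) + (u * 2 ^ (n + 1) - 1) • y := by
    simp only [Algebra.smul_def]
    change _ = ι _ * _ + ι _ * _
    simp only [map_mul, map_pow, map_sub, map_ofNat, map_one]
    linear_combination (ι u * 2 ^ (n + 1) - 1) * h + 2 ^ (n + 2) * m * hu'
  rw [key]
  exact N.add_mem (N.smul_mem _ h2) (N.smul_mem _ hy)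

lemma mul_ι_mem (N : Submodule S S2) {x : S2} (hx : x ∈ N) (a : S) (k : ℕ) : x * ι a ^ k ∈ N := by
  have h : x * ι a ^ k = (a ^ k) • x := by
    rw [Algebra.smul_def, map_pow, mul_comm]
    rfl
  exact h ▸ N.smul_mem _ hx

/-- **Equation (2).**  For `1 ≤ i ≤ 4`, `vᵢ − 2mᵢ` lies in the `S`-submodule `Mᵢ` of `S[1/2]`
generated by `2, m₁, …, m_{i−1}`. -/
theorem v_eq_two_m_mod_M
    (γ : S2 ≃+* S2)
    (hγr1 : γ (ι r1) = ι s1) (hγs1 : γ (ι s1) = -ι r1)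
    (hγr3 : γ (ι r3) = ι s3) (hγs3 : γ (ι s3) = -ι r3)
    (m1 m2 m3 m4 : S2)
    (hγ2m1 : γ (γ m1) = -m1) (hγ2m2 : γ (γ m2) = -m2)
    (hγ2m3 : γ (γ m3) = -m3) (hγ2m4 : γ (γ m4) = -m4)
    (hlog1 : m1 - γ m1 = ι r1)
    (hlog2 : m2 - γ m2 = γ m1 * ι r1 ^ 2 + ι r3)
    (hlog3 : m3 - γ m3 = γ m2 * ι r1 ^ 4 + γ m1 * ι r3 ^ 2)
    (hlog4 : m4 - γ m4 = γ m3 * ι r1 ^ 8 + γ m2 * ι r3 ^ 4)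
    (v1 v2 v3 v4 : S)
    (h2s1 : 2 * m1 = 4 * m1 + ι v1)
    (h2s2 : 2 * m2 = 16 * m2 + m1 * ι v1 ^ 2 + ι v2)
    (h2s3 : 2 * m3 = 2 ^ 8 * m3 + m2 * ι v1 ^ 4 + m1 * ι v2 ^ 2 + ι v3)
    (h2s4 : 2 * m4 = 2 ^ 16 * m4 + m3 * ι v1 ^ 8 + m2 * ι v2 ^ 4 + m1 * ι v3 ^ 2 + ι v4)
    : ι v1 - 2 * m1 ∈ Submodule.span S ({2} : Set S2) ∧
      ι v2 - 2 * m2 ∈ Submodule.span S ({2, m1} : Set S2) ∧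
      ι v3 - 2 * m3 ∈ Submodule.span S ({2, m1, m2} : Set S2) ∧
      ι v4 - 2 * m4 ∈ Submodule.span S ({2, m1, m2, m3} : Set S2) := by
  refine ⟨?_, ?_, ?_, ?_⟩
  · exact sub_two_mul_mem _ (Submodule.subset_span (by simp)) 0 m1 0 v1 (Submodule.zero_mem _)
      (by linear_combination h2s1)
  · refine sub_two_mul_mem _ (Submodule.subset_span (by simp)) 2 m2 (m1 * ι v1 ^ 2) v2 ?_
      (by linear_combination h2s2)
    exact mul_ι_mem _ (Submodule.subset_span (by simp)) _ _
  · refine sub_two_mul_mem _ (Submodule.subset_span (by simp)) 6 m3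
      (m2 * ι v1 ^ 4 + m1 * ι v2 ^ 2) v3 ?_ (by linear_combination h2s3)
    exact add_mem (mul_ι_mem _ (Submodule.subset_span (by simp)) _ _)
      (mul_ι_mem _ (Submodule.subset_span (by simp)) _ _)
  · refine sub_two_mul_mem _ (Submodule.subset_span (by simp)) 14 m4
      (m3 * ι v1 ^ 8 + m2 * ι v2 ^ 4 + m1 * ι v3 ^ 2) v4 ?_ (by linear_combination h2s4)
    exact add_mem (add_mem (mul_ι_mem _ (Submodule.subset_span (by simp)) _ _)
      (mul_ι_mem _ (Submodule.subset_span (by simp)) _ _))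
      (mul_ι_mem _ (Submodule.subset_span (by simp)) _ _)
end
end

section
/- (Identification of the quotient ring used in the proof of Theorem "BPC4-2isE4hC12".) Let v₁, v₂, v₃ ∈ S be any elements satisfying the congruences v₁ − (r₁ + s₁) ∈ (2), v₂ − (r₁³ + r₃ + s₃) ∈ (2, v₁), and v₃ − r₁·(r₃² + r₃s₃ + s₃²) ∈ (2, v₁, v₂), where each listed tuple denotes the corresponding ideal of S. Then there is a ring isomorphism S/(2, v₁, v₂, v₃) ≅ 𝔽₂[x, y]/(x·(y² + x³y + x⁶)) induced by the assignment r₁ ↦ x, s₁ ↦ x, r₃ ↦ y, s₃ ↦ x³ + y. -/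
/-!
The congruences allow the generators of `(2, v₁, v₂, v₃)` to be replaced, one after another, by
their explicit representatives, so this ideal equals
`(2, r₁ + s₁, r₁³ + r₃ + s₃, r₁(r₃² + r₃s₃ + s₃²))` (`span_eq_explicit`). Modulo `2` the second and
third generators eliminate `s₁ = r₁` and `s₃ = r₁³ + r₃`, and the last one becomes
`x(y² + y(x³ + y) + (x³ + y)²) = x(y² + x³y + x⁶)` over `𝔽₂`.

The isomorphism is assembled from two mutually inverse homomorphisms. The maps out of the coefficient
rings come from `zlocHom` (odd integers become units in any ring where `2 = 0`) and `zmodHom`;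
all homomorphisms out of `ℤ₍₂₎`, or out of `𝔽₂`, into a given ring agree, so composites need only be
compared on the variables.
-/

noncomputable section

open MvPolynomial

/-- The polynomial ring `𝔽₂[x, y]`. -/
abbrev F2Poly : Type := MvPolynomial (Fin 2) (ZMod 2)

/-- The variable `x` of `𝔽₂[x, y]`. -/
def xF2 : F2Poly := X 0
/-- The variable `y` of `𝔽₂[x, y]`. -/
def yF2 : F2Poly := X 1

/-- The ideal `(x·(y² + x³y + x⁶))` of `𝔽₂[x, y]`. -/
def J : Ideal F2Poly := Ideal.span {xF2 * (yF2 ^ 2 + xF2 ^ 3 * yF2 + xF2 ^ 6)}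

/-- In a ring where `2 = 0` every odd integer maps to `1`, so `ℤ → R` extends to `ℤ₍₂₎`. -/
def zlocHom {R : Type*} [CommRing R] (h : (2 : R) = 0) : Zloc →+* R :=
  IsLocalization.lift (M := (Ideal.span {(2 : ℤ)}).primeCompl) (g := Int.castRingHom R) (by
    rintro ⟨y, hy⟩
    have hodd : ¬ (2 : ℤ) ∣ y := fun hd => hy (Ideal.mem_span_singleton.mpr hd)
    obtain ⟨k, rfl⟩ : Odd y := by
      rw [← Int.not_even_iff_odd, even_iff_two_dvd]
      exact hodd
    simp [h])

/-- The homomorphism `𝔽₂ → R` when `2 = 0` in `R`. It is the cast along `ringChar R ∣ 2`, which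
also covers the zero ring. -/
def zmodHom {R : Type*} [CommRing R] (h : (2 : R) = 0) : ZMod 2 →+* R :=
  ZMod.castHom (ringChar.dvd (by exact_mod_cast h) : ringChar R ∣ 2) R

lemma zloc_hom_ext {R : Type*} [CommRing R] (f g : Zloc →+* R) : f = g :=
  IsLocalization.ringHom_ext (Ideal.span {(2 : ℤ)}).primeCompl (Subsingleton.elim _ _)

/-- The ideal `(2, v₁, v₂, v₃)` depends only on the given congruence classes. -/
lemma span_eq_explicit {R : Type*} [CommRing R] {v1 v2 v3 w1 w2 w3 : R}
    (hv1 : v1 - w1 ∈ Ideal.span ({2} : Set R))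
    (hv2 : v2 - w2 ∈ Ideal.span ({2, v1} : Set R))
    (hv3 : v3 - w3 ∈ Ideal.span ({2, v1, v2} : Set R)) :
    Ideal.span ({2, v1, v2, v3} : Set R) = Ideal.span {2, w1, w2, w3} := by
  apply le_antisymm
  · have h2 : (2 : R) ∈ Ideal.span ({2, w1, w2, w3} : Set R) := Ideal.subset_span (by simp)
    have m1 : v1 ∈ Ideal.span ({2, w1, w2, w3} : Set R) := by
      refine (Submodule.sub_mem_iff_left _ (Ideal.subset_span (by simp) : w1 ∈ _)).mp
        (Ideal.span_le.mpr ?_ hv1)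
      simpa [Set.insert_subset_iff] using h2
    have m2 : v2 ∈ Ideal.span ({2, w1, w2, w3} : Set R) := by
      refine (Submodule.sub_mem_iff_left _ (Ideal.subset_span (by simp) : w2 ∈ _)).mp
        (Ideal.span_le.mpr ?_ hv2)
      simpa [Set.insert_subset_iff] using ⟨h2, m1⟩
    have m3 : v3 ∈ Ideal.span ({2, w1, w2, w3} : Set R) := by
      refine (Submodule.sub_mem_iff_left _ (Ideal.subset_span (by simp) : w3 ∈ _)).mp
        (Ideal.span_le.mpr ?_ hv3)
      simpa [Set.insert_subset_iff] using ⟨h2, m1, m2⟩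
    rw [Ideal.span_le]
    simpa [Set.insert_subset_iff] using ⟨h2, m1, m2, m3⟩
  · have h2 : (2 : R) ∈ Ideal.span ({2, v1, v2, v3} : Set R) := Ideal.subset_span (by simp)
    have m1 : w1 ∈ Ideal.span ({2, v1, v2, v3} : Set R) :=
      (Submodule.sub_mem_iff_right _ (Ideal.subset_span (by simp) : v1 ∈ _)).mp
        (Ideal.span_mono (by simp) hv1)
    have m2 : w2 ∈ Ideal.span ({2, v1, v2, v3} : Set R) :=
      (Submodule.sub_mem_iff_right _ (Ideal.subset_span (by simp) : v2 ∈ _)).mp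
        (Ideal.span_mono (by simp [Set.insert_subset_iff]) hv2)
    have m3 : w3 ∈ Ideal.span ({2, v1, v2, v3} : Set R) :=
      (Submodule.sub_mem_iff_right _ (Ideal.subset_span (by simp) : v3 ∈ _)).mp
        (Ideal.span_mono (by simp [Set.insert_subset_iff]) hv3)
    rw [Ideal.span_le]
    simpa [Set.insert_subset_iff] using ⟨h2, m1, m2, m3⟩

/-- **Identification of the quotient ring** (proof of Theorem BPC4-2isE4hC12): for any
elements `v₁, v₂, v₃` of `S` satisfying the congruences of Theorem fglFormulas, there is a
ring isomorphism `S/(2, v₁, v₂, v₃) ≅ 𝔽₂[x, y]/(x·(y² + x³y + x⁶))` induced by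
`r₁ ↦ x`, `s₁ ↦ x`, `r₃ ↦ y`, `s₃ ↦ x³ + y`. -/
theorem quotient_identification
    (v1 v2 v3 : S)
    (hv1 : v1 - (r1 + s1) ∈ Ideal.span ({2} : Set S))
    (hv2 : v2 - (r1 ^ 3 + r3 + s3) ∈ Ideal.span ({2, v1} : Set S))
    (hv3 : v3 - r1 * (r3 ^ 2 + r3 * s3 + s3 ^ 2) ∈ Ideal.span ({2, v1, v2} : Set S)) :
    ∃ e : (S ⧸ Ideal.span ({2, v1, v2, v3} : Set S)) ≃+* (F2Poly ⧸ J),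
      e (Ideal.Quotient.mk (Ideal.span ({2, v1, v2, v3} : Set S)) r1) =
        Ideal.Quotient.mk J xF2 ∧
      e (Ideal.Quotient.mk (Ideal.span ({2, v1, v2, v3} : Set S)) s1) =
        Ideal.Quotient.mk J xF2 ∧
      e (Ideal.Quotient.mk (Ideal.span ({2, v1, v2, v3} : Set S)) r3) =
        Ideal.Quotient.mk J yF2 ∧
      e (Ideal.Quotient.mk (Ideal.span ({2, v1, v2, v3} : Set S)) s3) =
        Ideal.Quotient.mk J (xF2 ^ 3 + yF2) := by
  rw [span_eq_explicit hv1 hv2 hv3]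
  set I : Ideal S :=
    Ideal.span {2, r1 + s1, r1 ^ 3 + r3 + s3, r1 * (r3 ^ 2 + r3 * s3 + s3 ^ 2)} with hI
  have two_Q : (2 : F2Poly ⧸ J) = 0 := by
    have h : (2 : F2Poly) = 0 := CharTwo.two_eq_zero
    rw [← map_ofNat (Ideal.Quotient.mk J) 2, h, map_zero]
  have two_I : (2 : S ⧸ I) = 0 := by
    rw [← map_ofNat (Ideal.Quotient.mk I) 2]
    exact Ideal.Quotient.eq_zero_iff_mem.mpr (Ideal.subset_span (by simp))
  have rel_J : Ideal.Quotient.mk J xF2 * (Ideal.Quotient.mk J yF2 ^ 2 +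
      Ideal.Quotient.mk J xF2 ^ 3 * Ideal.Quotient.mk J yF2 + Ideal.Quotient.mk J xF2 ^ 6) = 0 := by
    simp only [← map_add, ← map_pow, ← map_mul]
    exact Ideal.Quotient.eq_zero_iff_mem.mpr (Ideal.mem_span_singleton_self _)
  have rel1 : Ideal.Quotient.mk I r1 + Ideal.Quotient.mk I s1 = 0 := by
    rw [← map_add]
    exact Ideal.Quotient.eq_zero_iff_mem.mpr (Ideal.subset_span (by simp))
  have rel2 : Ideal.Quotient.mk I r1 ^ 3 + Ideal.Quotient.mk I r3 + Ideal.Quotient.mk I s3 = 0 := by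
    simp only [← map_add, ← map_pow]
    exact Ideal.Quotient.eq_zero_iff_mem.mpr (Ideal.subset_span (by simp))
  have rel3 : Ideal.Quotient.mk I r1 * (Ideal.Quotient.mk I r3 ^ 2 +
      Ideal.Quotient.mk I r3 * Ideal.Quotient.mk I s3 + Ideal.Quotient.mk I s3 ^ 2) = 0 := by
    simp only [← map_add, ← map_pow, ← map_mul]
    exact Ideal.Quotient.eq_zero_iff_mem.mpr (Ideal.subset_span (by simp))
  have s1_eq : Ideal.Quotient.mk I s1 = Ideal.Quotient.mk I r1 := by
    linear_combination rel1 - Ideal.Quotient.mk I r1 * two_I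
  have s3_eq : Ideal.Quotient.mk I s3 = Ideal.Quotient.mk I r1 ^ 3 + Ideal.Quotient.mk I r3 := by
    linear_combination rel2 - (Ideal.Quotient.mk I r1 ^ 3 + Ideal.Quotient.mk I r3) * two_I
  let x := Ideal.Quotient.mk J xF2
  let y := Ideal.Quotient.mk J yF2
  let f : S →+* F2Poly ⧸ J := eval₂Hom (zlocHom two_Q) ![x, x, y, x ^ 3 + y]
  have f_r1 : f r1 = x := by simp [f, r1]
  have f_s1 : f s1 = x := by simp [f, s1]
  have f_r3 : f r3 = y := by simp [f, r3]
  have f_s3 : f s3 = x ^ 3 + y := by simp [f, s3]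
  have hf : ∀ a ∈ I, f a = 0 := by
    suffices h : I ≤ RingHom.ker f from fun a ha => h ha
    rw [hI, Ideal.span_le]
    simp only [Set.insert_subset_iff, Set.singleton_subset_iff, SetLike.mem_coe, RingHom.mem_ker,
      map_add, map_mul, map_pow, map_ofNat, f_r1, f_s1, f_r3, f_s3]
    refine ⟨two_Q, ?_, ?_, ?_⟩
    · linear_combination x * two_Q
    · linear_combination (x ^ 3 + y) * two_Q
    · linear_combination rel_J + (x * y ^ 2 + x ^ 4 * y) * two_Q
  let g : F2Poly →+* S ⧸ I :=
    eval₂Hom (zmodHom two_I) ![Ideal.Quotient.mk I r1, Ideal.Quotient.mk I r3]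
  have g_x : g xF2 = Ideal.Quotient.mk I r1 := by simp [g, xF2]
  have g_y : g yF2 = Ideal.Quotient.mk I r3 := by simp [g, yF2]
  have hg : ∀ a ∈ J, g a = 0 := by
    suffices h : J ≤ RingHom.ker g from fun a ha => h ha
    rw [J, Ideal.span_le]
    simp only [Set.singleton_subset_iff, SetLike.mem_coe, RingHom.mem_ker,
      map_add, map_mul, map_pow, g_x, g_y]
    rw [s3_eq] at rel3
    set a := Ideal.Quotient.mk I r1
    set b := Ideal.Quotient.mk I r3
    linear_combination rel3 - (a * b ^ 2 + a ^ 4 * b) * two_I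
  let F := Ideal.Quotient.lift I f hf
  let G := Ideal.Quotient.lift J g hg
  have hFG : F.comp G = RingHom.id _ := by
    apply Ideal.Quotient.ringHom_ext
    refine MvPolynomial.ringHom_ext' (Subsingleton.elim _ _) fun i => ?_
    fin_cases i
    · change F (g xF2) = x
      rw [g_x]
      exact f_r1
    · change F (g yF2) = y
      rw [g_y]
      exact f_r3
  have hGF : G.comp F = RingHom.id _ := by
    apply Ideal.Quotient.ringHom_ext
    refine MvPolynomial.ringHom_ext' ?_ fun i => ?_
    · exact zloc_hom_ext (R := S ⧸ I) _ _
    fin_cases i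
    · change G (f r1) = Ideal.Quotient.mk I r1
      rw [f_r1]
      exact g_x
    · change G (f s1) = Ideal.Quotient.mk I s1
      rw [f_s1, s1_eq]
      exact g_x
    · change G (f r3) = Ideal.Quotient.mk I r3
      rw [f_r3]
      exact g_y
    · change G (f s3) = Ideal.Quotient.mk I s3
      rw [f_s3, s3_eq, map_add, map_pow]
      exact congrArg₂ (fun a b => a ^ 3 + b) g_x g_y
  refine ⟨RingEquiv.ofRingHom F G hFG hGF, f_r1, f_s1, f_r3, ?_⟩
  rw [map_add, map_pow]
  exact f_s3
end
end
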